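/- (Strong duality for KL-regularized problems.) Let N ≥ 1, let ξ ∈ ℝ^{N×N} have strictly positive entries, and let φ_1, φ_2 : ℝ^{N×N} → ℝ ∪ {+∞} be proper, lower semicontinuous, convex functions such that ri(dom φ_1) ∩ ri(dom φ_2) ∩ {π : all entries of π are strictly positive} ≠ ∅. Then min_{π ∈ ℝ_+^{N×N}} KL(π|ξ) + φ_1(π) + φ_2(π) = max_{u_1, u_2 ∈ ℝ^{N×N}} [ −φ_1^*(u_1) − φ_2^*(u_2) − Σ_{i,j} ξ_{ij} e^{−(u_1+u_2)_{ij}} + Σ_{i,j} ξ_{ij} ], the maximum on the right is attained at some (u_1^*, u_2^*), and the unique primal minimizer is recovered as π^* = ξ ⊙ e^{−u_1^* − u_2^*} (entrywise exponential and product). -/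

import Mathlib

open scoped BigOperators

noncomputable section

def ProperLSCConvex {E : Type*} [AddCommGroup E] [Module ℝ E] [TopologicalSpace E]
    (f : E → EReal) : Prop :=
  (∀ x, f x ≠ ⊥) ∧ (∃ x, f x ≠ ⊤) ∧ LowerSemicontinuous f ∧
    ∀ x y : E, ∀ a b : ℝ, 0 ≤ a → 0 ≤ b → a + b = 1 →
      f (a • x + b • y) ≤ (a : EReal) * f x + (b : EReal) * f y

def KLmat {N : ℕ} (π ξ : Fin N → Fin N → ℝ) : ℝ :=
  ∑ i, ∑ j, (π i j * Real.log (π i j / ξ i j) - π i j + ξ i j)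

def frob {N : ℕ} (u π : Fin N → Fin N → ℝ) : ℝ :=
  ∑ i, ∑ j, u i j * π i j

/-- Legendre–Fenchel conjugate `φ^*(u) = sup_π ⟨u,π⟩ - φ(π)`. -/
def conj {N : ℕ} (φ : (Fin N → Fin N → ℝ) → EReal) (u : Fin N → Fin N → ℝ) : EReal :=
  ⨆ π : Fin N → Fin N → ℝ, ((frob u π : ℝ) : EReal) - φ π

/-!
The Gibbs density `ξ ⊙ e^{-v}` turns the linear term `⟨v, π⟩` into a change of reference:
`KL(π|ξ ⊙ e^{-v}) = KL(π|ξ) + ⟨v, π⟩ + ∑ ξ e^{-v} - ∑ ξ`. Together with the Fenchel–Young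
inequality this shows that the duality gap between `π` and `(u₁, u₂)` is at least
`KL(π|ξ ⊙ e^{-u₁-u₂})`. As this divergence is nonnegative, coercive and zero only on the diagonal,
weak duality follows, the lower semicontinuous primal objective attains its minimum, and if
`(u₁, u₂)` closes the gap then `ξ ⊙ e^{-u₁-u₂}` is the only minimizer.

A pair closing the gap is found by separation. A concave function lying below a convex one, their
domains having a common relative interior point, admits an affine function in between; applied to
`φ₂` and then to `φ₁`, this replaces each of them by a linear term minus its conjugate.
-/

section ConvexSandwich

open Set Filter
open scoped Topology Pointwise

variable {E : Type*} [AddCommGroup E] [Module ℝ E]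

/-- The algebraic relative interior (intrinsic core) of a set: the points from which one can move
a little away from every other point of the set without leaving it. It stands in for
`intrinsicInterior` in separation arguments, where no topology is needed. -/
def algRelInterior (C : Set E) : Set E :=
  {p ∈ C | ∀ y ∈ C, ∀ᶠ t : ℝ in 𝓝[>] 0, p - t • (y - p) ∈ C}

lemma intrinsicInterior_subset_algRelInterior [TopologicalSpace E] [IsTopologicalAddGroup E]
    [ContinuousSMul ℝ E] (C : Set E) : intrinsicInterior ℝ C ⊆ algRelInterior C := by
  intro p hp
  refine ⟨intrinsicInterior_subset hp, fun y hy => ?_⟩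
  obtain ⟨q, hq, rfl⟩ := mem_intrinsicInterior.1 hp
  have mem_span (t : ℝ) : (q : E) - t • (y - q) ∈ affineSpan ℝ C := by
    have := AffineMap.lineMap_mem (-t) q.2 (subset_affineSpan ℝ C hy)
    rwa [AffineMap.lineMap_apply, vsub_eq_sub, vadd_eq_add, neg_smul, neg_add_eq_sub] at this
  let ray (t : ℝ) : affineSpan ℝ C := ⟨q - t • (y - q), mem_span t⟩
  have ray_continuous : Continuous ray := Continuous.subtype_mk (by fun_prop) _
  have ray_zero : ray 0 = q := Subtype.ext (by simp [ray])
  have : ∀ᶠ t in 𝓝 (0 : ℝ), (ray t : E) ∈ C :=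
    ray_continuous.continuousAt (ray_zero.symm ▸ mem_interior_iff_mem_nhds.1 hq)
  exact this.filter_mono nhdsWithin_le_nhds

lemma mem_algRelInterior_singleton (p : E) : p ∈ algRelInterior {p} := by
  simp [algRelInterior]

lemma mem_algRelInterior_inter {C D : Set E} {p : E} (hC : p ∈ algRelInterior C)
    (hD : p ∈ algRelInterior D) : p ∈ algRelInterior (C ∩ D) :=
  ⟨⟨hC.1, hD.1⟩, fun y hy => (hC.2 y hy.1).and (hD.2 y hy.2)⟩

lemma zero_mem_algRelInterior_sub {C D : Set E} {p : E} (hC : p ∈ algRelInterior C)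
    (hD : p ∈ algRelInterior D) : 0 ∈ algRelInterior (C - D) := by
  refine ⟨⟨p, hC.1, p, hD.1, sub_self p⟩, ?_⟩
  rintro _ ⟨x, hx, y, hy, rfl⟩
  filter_upwards [hC.2 x hx, hD.2 y hy] with t htC htD
  exact ⟨_, htC, _, htD, by module⟩

lemma mem_algRelInterior_Ici_zero_of_pos {ι κ : Type*} [Finite ι] [Finite κ] {p : ι → κ → ℝ}
    (hp : ∀ i j, 0 < p i j) : p ∈ algRelInterior (Ici 0) := by
  refine ⟨fun i j => (hp i j).le, fun y _ => ?_⟩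
  have entry_pos (i j) : ∀ᶠ t : ℝ in 𝓝 0, 0 < p i j - t * (y i j - p i j) :=
    ContinuousAt.eventually_lt (by fun_prop) (by fun_prop) (by simpa using hp i j)
  filter_upwards [nhdsWithin_le_nhds (eventually_all.2 fun i => eventually_all.2 (entry_pos i))]
    with t ht i j using (ht i j).le

lemma mem_convexConeHull_of_mem_span {A : Set E} (hA : Convex ℝ A) (h0 : 0 ∈ algRelInterior A)
    {x : E} (hx : x ∈ Submodule.span ℝ A) : x ∈ ConvexCone.hull ℝ A := by
  have zero_mem : 0 ∈ ConvexCone.hull ℝ A := ConvexCone.subset_hull h0.1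
  have neg_mem {a : E} (ha : a ∈ ConvexCone.hull ℝ A) : -a ∈ ConvexCone.hull ℝ A := by
    obtain ⟨c, hc, y, hy, rfl⟩ := (ConvexCone.mem_hull_of_convex hA).1 ha
    obtain ⟨t, hyt, ht⟩ := ((h0.2 y hy).and self_mem_nhdsWithin).exists
    rw [zero_sub, sub_zero] at hyt
    have : (c / t) • -(t • y) = -(c • y) := by
      rw [smul_neg, smul_smul, div_mul_cancel₀ c (ne_of_gt ht)]
    exact this ▸ ConvexCone.smul_mem _ (div_pos hc ht) (ConvexCone.subset_hull hyt)
  induction hx using Submodule.span_induction with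
  | mem a ha => exact ConvexCone.subset_hull ha
  | zero => exact zero_mem
  | add a b _ _ ha hb => exact add_mem ha hb
  | smul r a _ ha =>
    rcases lt_trichotomy r 0 with hr | rfl | hr
    · rw [← neg_smul_neg]
      exact ConvexCone.smul_mem _ (neg_pos.2 hr) (neg_mem ha)
    · rwa [zero_smul]
    · exact ConvexCone.smul_mem _ hr ha

lemma eq_zero_or_mem_convexConeHull_of_mem_pointedConeHull {A : Set E} {x : E}
    (hx : x ∈ PointedCone.hull ℝ A) : x = 0 ∨ x ∈ ConvexCone.hull ℝ A := by
  induction hx using Submodule.span_induction with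
  | mem a ha => exact .inr (ConvexCone.subset_hull ha)
  | zero => exact .inl rfl
  | add a b _ _ ha hb =>
    rcases ha with rfl | ha
    · rwa [zero_add]
    rcases hb with rfl | hb
    · exact .inr (by rwa [add_zero])
    · exact .inr (add_mem ha hb)
  | smul r a _ ha =>
    rcases ha with rfl | ha
    · exact .inl (smul_zero r)
    rcases eq_zero_or_pos r with rfl | hr
    · exact .inl (zero_smul _ a)
    · exact .inr (ConvexCone.smul_mem _ hr ha)

lemma exists_linearMap_le_snd_of_absorbing {S : Set (E × ℝ)} (hS : Convex ℝ S)
    (absorbing : ∀ x : E, ∃ c : ℝ, 0 < c ∧ ∃ z ∈ S, c • z.1 = x)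
    (nonneg : ∀ t : ℝ, ((0 : E), t) ∈ S → 0 ≤ t) :
    ∃ L : E →ₗ[ℝ] ℝ, ∀ z ∈ S, L z.1 ≤ z.2 := by
  let height : (E × ℝ) →ₗ.[ℝ] ℝ :=
    { domain := (⊥ : Submodule ℝ E).prod ⊤
      toFun := LinearMap.snd ℝ E ℝ ∘ₗ ((⊥ : Submodule ℝ E).prod ⊤).subtype }
  have height_nonneg (v : height.domain) (hv : (v : E × ℝ) ∈ PointedCone.hull ℝ S) :
      0 ≤ height v := by
    change 0 ≤ (v : E × ℝ).2
    rcases eq_zero_or_mem_convexConeHull_of_mem_pointedConeHull hv with h | h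
    · rw [h, Prod.snd_zero]
    obtain ⟨c, hc, z, hz, hzv⟩ := (ConvexCone.mem_hull_of_convex hS).1 h
    have hz0 : z.1 = 0 := by
      have : c • z.1 = 0 := (congrArg Prod.fst hzv).trans v.2.1
      exact (smul_eq_zero.1 this).resolve_left hc.ne'
    rw [← hzv]
    exact mul_nonneg hc.le (nonneg z.2 (hz0 ▸ hz))
  have vertical_translate (w : E × ℝ) :
      ∃ v : height.domain, (v : E × ℝ) + w ∈ PointedCone.hull ℝ S := by
    obtain ⟨c, hc, z, hz, hzw⟩ := absorbing w.1
    refine ⟨⟨(0, c * z.2 - w.2), rfl, trivial⟩, ?_⟩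
    have : ((0 : E), c * z.2 - w.2) + w = c • z := Prod.ext (by simp [hzw]) (by simp)
    exact this ▸ PointedCone.smul_mem _ hc.le (PointedCone.subset_hull hz)
  obtain ⟨g, hg_height, hg_nonneg⟩ :=
    riesz_extension (PointedCone.hull ℝ S) height height_nonneg vertical_translate
  refine ⟨-(g ∘ₗ LinearMap.inl ℝ E ℝ), fun z hz => ?_⟩
  have hg_snd : g (0, z.2) = z.2 := hg_height ⟨(0, z.2), rfl, trivial⟩
  have hg_split : g z = g (z.1, 0) + g (0, z.2) := by simp [← map_add]
  have := hg_nonneg z (PointedCone.subset_hull hz)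
  simp only [LinearMap.neg_apply, LinearMap.comp_apply, LinearMap.inl_apply]
  linarith

lemma exists_linearMap_le_snd {S : Set (E × ℝ)} (hS : Convex ℝ S)
    (h0 : 0 ∈ algRelInterior (Prod.fst '' S)) (nonneg : ∀ t : ℝ, ((0 : E), t) ∈ S → 0 ≤ t) :
    ∃ L : E →ₗ[ℝ] ℝ, ∀ z ∈ S, L z.1 ≤ z.2 := by
  let V := Submodule.span ℝ (Prod.fst '' S)
  have fst_convex : Convex ℝ (Prod.fst '' S) := hS.linear_image (LinearMap.fst ℝ E ℝ)
  have fst_mem {z : E × ℝ} (hz : z ∈ S) : z.1 ∈ V := Submodule.subset_span ⟨z, hz, rfl⟩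
  obtain ⟨L, hL⟩ := exists_linearMap_le_snd_of_absorbing
    (hS.linear_preimage (V.subtype.prodMap LinearMap.id))
    (fun x => by
      obtain ⟨c, hc, _, ⟨z, hz, rfl⟩, hzx⟩ :=
        (ConvexCone.mem_hull_of_convex fst_convex).1
          (mem_convexConeHull_of_mem_span fst_convex h0 x.2)
      exact ⟨c, hc, (⟨z.1, fst_mem hz⟩, z.2), hz, Subtype.ext hzx⟩)
    (fun t ht => nonneg t ht)
  obtain ⟨L', hL'⟩ := L.exists_extend
  refine ⟨L', fun z hz => ?_⟩
  have : L' z.1 = L ⟨z.1, fst_mem hz⟩ := LinearMap.congr_fun hL' ⟨z.1, fst_mem hz⟩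
  exact this ▸ hL (⟨z.1, fst_mem hz⟩, z.2) hz

theorem exists_affine_between_of_concaveOn_le_convexOn {C D : Set E} {f g : E → ℝ} {p : E}
    (hf : ConvexOn ℝ C f) (hg : ConcaveOn ℝ D g) (hpC : p ∈ algRelInterior C)
    (hpD : p ∈ algRelInterior D) (hgf : ∀ x ∈ C ∩ D, g x ≤ f x) :
    ∃ (L : E →ₗ[ℝ] ℝ) (c : ℝ), (∀ y ∈ D, g y ≤ L y + c) ∧ ∀ x ∈ C, L x + c ≤ f x := by
  let S : Set (E × ℝ) := {z | z.1 ∈ C ∧ f z.1 ≤ z.2} - {z | z.1 ∈ D ∧ z.2 ≤ g z.1}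
  have sub_mem {x y : E} (hx : x ∈ C) (hy : y ∈ D) : (x - y, f x - g y) ∈ S :=
    ⟨(x, f x), ⟨hx, le_rfl⟩, (y, g y), ⟨hy, le_rfl⟩, rfl⟩
  have fst_image : Prod.fst '' S = C - D := by
    ext z
    constructor
    · rintro ⟨_, ⟨x, hx, y, hy, rfl⟩, rfl⟩
      exact ⟨x.1, hx.1, y.1, hy.1, rfl⟩
    · rintro ⟨x, hx, y, hy, rfl⟩
      exact ⟨_, sub_mem hx hy, rfl⟩
  have nonneg (t : ℝ) (ht : ((0 : E), t) ∈ S) : 0 ≤ t := by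
    obtain ⟨⟨x, r⟩, ⟨hx, hr⟩, ⟨y, s⟩, ⟨hy, hs⟩, h⟩ := ht
    obtain ⟨hxy, rfl⟩ := Prod.mk.inj h
    obtain rfl : x = y := sub_eq_zero.1 hxy
    exact sub_nonneg.2 (hs.trans ((hgf x ⟨hx, hy⟩).trans hr))
  obtain ⟨L, hL⟩ := exists_linearMap_le_snd (hf.convex_epigraph.sub hg.convex_hypograph)
    (fst_image ▸ zero_mem_algRelInterior_sub hpC hpD) nonneg
  obtain ⟨c, hcD, hcC⟩ := exists_between_of_forall_le
    (s := (fun y => g y - L y) '' D) (t := (fun x => f x - L x) '' C)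
    ⟨_, p, hpD.1, rfl⟩ ⟨_, p, hpC.1, rfl⟩ (by
      rintro _ ⟨y, hy, rfl⟩ _ ⟨x, hx, rfl⟩
      have := hL _ (sub_mem hx hy)
      simp only [map_sub] at this
      linarith)
  refine ⟨L, c, fun y hy => ?_, fun x hx => ?_⟩
  · linarith [hcD ⟨y, hy, rfl⟩]
  · linarith [hcC ⟨x, hx, rfl⟩]

end ConvexSandwich

section KullbackLeibler

open Set InformationTheory

variable {N : ℕ} {ξ : Fin N → Fin N → ℝ}

/-- The Gibbs density `ξ ⊙ e^{-v}` with reference `ξ` and potential `v`. -/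
def gibbs (ξ v : Fin N → Fin N → ℝ) : Fin N → Fin N → ℝ :=
  fun i j => ξ i j * Real.exp (-v i j)

lemma gibbs_pos (hξ : ∀ i j, 0 < ξ i j) (v : Fin N → Fin N → ℝ) (i j : Fin N) :
    0 < gibbs ξ v i j :=
  mul_pos (hξ i j) (Real.exp_pos _)

lemma frob_add_left (u v x : Fin N → Fin N → ℝ) : frob (u + v) x = frob u x + frob v x := by
  simp only [frob, Pi.add_apply, add_mul, Finset.sum_add_distrib]

lemma convexOn_frob {C : Set (Fin N → Fin N → ℝ)} (hC : Convex ℝ C) (u : Fin N → Fin N → ℝ) :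
    ConvexOn ℝ C (frob u) := by
  refine ⟨hC, fun x _ y _ a b _ _ _ => le_of_eq ?_⟩
  simp only [frob, smul_eq_mul, Finset.mul_sum, ← Finset.sum_add_distrib]
  refine Finset.sum_congr rfl fun i _ => Finset.sum_congr rfl fun j _ => ?_
  simp only [Pi.add_apply, Pi.smul_apply, smul_eq_mul]
  ring

lemma exists_forall_eq_frob (L : (Fin N → Fin N → ℝ) →ₗ[ℝ] ℝ) : ∃ u, ∀ x, L x = frob u x := by
  refine ⟨fun i j => L (Pi.single i (Pi.single j 1)), fun x => ?_⟩
  have expansion : x = ∑ i, ∑ j, x i j • Pi.single i (Pi.single j 1) := by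
    ext a b
    simp [Finset.sum_apply, Pi.single_apply, apply_ite, ite_apply]
  conv_lhs => rw [expansion]
  simp only [map_sum, map_smul, smul_eq_mul, frob, mul_comm]

lemma mul_klFun_div {a : ℝ} (ha : a ≠ 0) (x : ℝ) :
    a * klFun (x / a) = x * Real.log (x / a) - x + a := by
  rw [klFun_apply]
  field_simp
  ring

lemma KLmat_eq_sum_klFun (hξ : ∀ i j, 0 < ξ i j) (x : Fin N → Fin N → ℝ) :
    KLmat x ξ = ∑ i, ∑ j, ξ i j * klFun (x i j / ξ i j) := by
  simp only [KLmat, mul_klFun_div (hξ _ _).ne']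

lemma continuous_KLmat (hξ : ∀ i j, 0 < ξ i j) :
    Continuous fun x : Fin N → Fin N → ℝ => KLmat x ξ := by
  simp only [KLmat_eq_sum_klFun hξ]
  fun_prop

lemma convexOn_KLmat (hξ : ∀ i j, 0 < ξ i j) :
    ConvexOn ℝ (Ici 0) fun x : Fin N → Fin N → ℝ => KLmat x ξ := by
  refine ⟨convex_Ici 0, fun x hx y hy a b ha hb hab => ?_⟩
  simp only [KLmat_eq_sum_klFun hξ, smul_eq_mul, Finset.mul_sum, ← Finset.sum_add_distrib]
  refine Finset.sum_le_sum fun i _ => Finset.sum_le_sum fun j _ => ?_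
  have entry := convexOn_klFun.2 (div_nonneg (hx i j) (hξ i j).le)
    (div_nonneg (hy i j) (hξ i j).le) ha hb hab
  calc ξ i j * klFun ((a • x + b • y) i j / ξ i j)
      = ξ i j * klFun (a • (x i j / ξ i j) + b • (y i j / ξ i j)) := by
        simp only [Pi.add_apply, Pi.smul_apply, smul_eq_mul, add_div, mul_div_assoc]
    _ ≤ ξ i j * (a * klFun (x i j / ξ i j) + b * klFun (y i j / ξ i j)) :=
        mul_le_mul_of_nonneg_left entry (hξ i j).le
    _ = a * (ξ i j * klFun (x i j / ξ i j)) + b * (ξ i j * klFun (y i j / ξ i j)) := by ring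

lemma KLmat_gibbs_right (hξ : ∀ i j, 0 < ξ i j) (v x : Fin N → Fin N → ℝ) :
    KLmat x (gibbs ξ v) =
      KLmat x ξ + frob v x + ∑ i, ∑ j, gibbs ξ v i j - ∑ i, ∑ j, ξ i j := by
  simp only [KLmat, frob, ← Finset.sum_add_distrib, ← Finset.sum_sub_distrib]
  refine Finset.sum_congr rfl fun i _ => Finset.sum_congr rfl fun j _ => ?_
  rcases eq_or_ne (x i j) 0 with hx | hx
  · simp [hx]
  · have : Real.log (x i j / gibbs ξ v i j) = Real.log (x i j / ξ i j) + v i j := by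
      rw [gibbs, ← div_div, Real.log_div (div_ne_zero hx (hξ i j).ne') (Real.exp_ne_zero _),
        Real.log_exp, sub_neg_eq_add]
    rw [this]
    ring

lemma KLmat_self (hξ : ∀ i j, 0 < ξ i j) : KLmat ξ ξ = 0 := by
  simp [KLmat, div_self (hξ _ _).ne']

lemma mul_klFun_div_le_KLmat (hξ : ∀ i j, 0 < ξ i j) {x : Fin N → Fin N → ℝ} (hx : 0 ≤ x)
    (i j : Fin N) : ξ i j * klFun (x i j / ξ i j) ≤ KLmat x ξ := by
  have nonneg (i j) : 0 ≤ ξ i j * klFun (x i j / ξ i j) :=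
    mul_nonneg (hξ i j).le (klFun_nonneg (div_nonneg (hx i j) (hξ i j).le))
  rw [KLmat_eq_sum_klFun hξ]
  calc ξ i j * klFun (x i j / ξ i j)
      ≤ ∑ j, ξ i j * klFun (x i j / ξ i j) :=
        Finset.single_le_sum (f := fun j => ξ i j * klFun (x i j / ξ i j))
          (fun j _ => nonneg i j) (Finset.mem_univ j)
    _ ≤ ∑ i, ∑ j, ξ i j * klFun (x i j / ξ i j) :=
        Finset.single_le_sum (f := fun i => ∑ j, ξ i j * klFun (x i j / ξ i j))
          (fun i _ => Finset.sum_nonneg fun j _ => nonneg i j) (Finset.mem_univ i)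

lemma KLmat_nonneg (hξ : ∀ i j, 0 < ξ i j) {x : Fin N → Fin N → ℝ} (hx : 0 ≤ x) :
    0 ≤ KLmat x ξ := by
  rw [KLmat_eq_sum_klFun hξ]
  exact Finset.sum_nonneg fun i _ => Finset.sum_nonneg fun j _ =>
    mul_nonneg (hξ i j).le (klFun_nonneg (div_nonneg (hx i j) (hξ i j).le))

lemma eq_of_KLmat_nonpos (hξ : ∀ i j, 0 < ξ i j) {x : Fin N → Fin N → ℝ} (hx : 0 ≤ x)
    (h : KLmat x ξ ≤ 0) : x = ξ := by
  ext i j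
  have ratio_nonneg : 0 ≤ x i j / ξ i j := div_nonneg (hx i j) (hξ i j).le
  have : klFun (x i j / ξ i j) ≤ 0 :=
    nonpos_of_mul_nonpos_right ((mul_klFun_div_le_KLmat hξ hx i j).trans h) (hξ i j)
  exact (div_eq_one_iff_eq (hξ i j).ne').1 <|
    (klFun_eq_zero_iff ratio_nonneg).1 (this.antisymm (klFun_nonneg ratio_nonneg))

/-- The right-hand side lies above its tangent line at `e`, where its slope is `log e = 1`. -/
lemma add_one_sub_exp_one_le_klFun {t : ℝ} (ht : 0 ≤ t) : t + 1 - Real.exp 1 ≤ klFun t := by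
  rcases ht.eq_or_lt with rfl | ht
  · simp [klFun_zero, (Real.exp_pos 1).le]
  have log_bound : 1 - Real.exp 1 / t ≤ Real.log t - 1 := by
    have := Real.one_sub_inv_le_log_of_pos (div_pos ht (Real.exp_pos 1))
    rwa [inv_div, Real.log_div ht.ne' (Real.exp_ne_zero 1), Real.log_exp] at this
  have : t * (1 - Real.exp 1 / t) ≤ t * (Real.log t - 1) :=
    mul_le_mul_of_nonneg_left log_bound ht.le
  rw [mul_sub, mul_div_cancel₀ _ ht.ne'] at this
  rw [klFun_apply]
  linarith

lemma le_KLmat_add (hξ : ∀ i j, 0 < ξ i j) {x : Fin N → Fin N → ℝ} (hx : 0 ≤ x) (i j : Fin N) :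
    x i j ≤ KLmat x ξ + (Real.exp 1 - 1) * ξ i j := by
  have tangent := mul_le_mul_of_nonneg_left
    (add_one_sub_exp_one_le_klFun (div_nonneg (hx i j) (hξ i j).le)) (hξ i j).le
  have : ξ i j * (x i j / ξ i j + 1 - Real.exp 1) = x i j - (Real.exp 1 - 1) * ξ i j := by
    rw [add_sub_assoc, mul_add, mul_div_cancel₀ _ (hξ i j).ne']
    ring
  linarith [mul_klFun_div_le_KLmat hξ hx i j]

end KullbackLeibler

section FenchelDuality

variable {N : ℕ} {φ : (Fin N → Fin N → ℝ) → EReal}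

namespace ProperLSCConvex

lemma coe_toReal {E : Type*} [AddCommGroup E] [Module ℝ E] [TopologicalSpace E] {φ : E → EReal}
    (hφ : ProperLSCConvex φ) {x : E} (hx : φ x ≠ ⊤) : ((φ x).toReal : EReal) = φ x :=
  EReal.coe_toReal hx (hφ.1 x)

lemma convexOn_toReal {E : Type*} [AddCommGroup E] [Module ℝ E] [TopologicalSpace E]
    {φ : E → EReal} (hφ : ProperLSCConvex φ) :
    ConvexOn ℝ {x | φ x ≠ ⊤} fun x => (φ x).toReal := by
  have le_combination {x y : E} (hx : φ x ≠ ⊤) (hy : φ y ≠ ⊤) {a b : ℝ} (ha : 0 ≤ a) (hb : 0 ≤ b)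
      (hab : a + b = 1) :
      φ (a • x + b • y) ≤ ((a * (φ x).toReal + b * (φ y).toReal : ℝ) : EReal) := by
    have := hφ.2.2.2 x y a b ha hb hab
    rw [← hφ.coe_toReal hx, ← hφ.coe_toReal hy] at this
    exact_mod_cast this
  have convex_dom : Convex ℝ {x | φ x ≠ ⊤} := fun x hx y hy a b ha hb hab =>
    ne_top_of_le_ne_top (EReal.coe_ne_top _) (le_combination hx hy ha hb hab)
  refine ⟨convex_dom, fun x hx y hy a b ha hb hab => ?_⟩
  rw [← EReal.coe_le_coe_iff, hφ.coe_toReal (convex_dom hx hy ha hb hab)]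
  exact le_combination hx hy ha hb hab

end ProperLSCConvex

lemma frob_sub_le_conj (φ : (Fin N → Fin N → ℝ) → EReal) (u x : Fin N → Fin N → ℝ) :
    (frob u x : EReal) - φ x ≤ conj φ u :=
  le_iSup (fun x => (frob u x : EReal) - φ x) x

theorem exists_conj_le_and_forall_add_le (hφ : ProperLSCConvex φ)
    {C : Set (Fin N → Fin N → ℝ)} {f : (Fin N → Fin N → ℝ) → ℝ} (hf : ConvexOn ℝ C f)
    {p : Fin N → Fin N → ℝ} (hpC : p ∈ algRelInterior C)
    (hpφ : p ∈ algRelInterior {x | φ x ≠ ⊤}) {m : ℝ} (hm : ∀ x ∈ C, (m : EReal) ≤ f x + φ x) :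
    ∃ (u : Fin N → Fin N → ℝ) (c : ℝ),
      conj φ u ≤ c ∧ ∀ x ∈ C, m + c ≤ f x + frob u x := by
  have concave : ConcaveOn ℝ {x | φ x ≠ ⊤} fun x => m - (φ x).toReal :=
    (concaveOn_const m hφ.convexOn_toReal.1).sub hφ.convexOn_toReal
  obtain ⟨L, a, hLφ, hLf⟩ :=
    exists_affine_between_of_concaveOn_le_convexOn hf concave hpC hpφ (by
      rintro x ⟨hxC, hxφ⟩
      have := hm x hxC
      rw [← hφ.coe_toReal hxφ] at this
      exact sub_le_iff_le_add.2 (by exact_mod_cast this))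
  obtain ⟨u, hu⟩ := exists_forall_eq_frob (-L)
  refine ⟨u, a - m, iSup_le fun x => ?_, fun x hx => ?_⟩
  · rcases eq_or_ne (φ x) ⊤ with hx | hx
    · simp [hx]
    · have := hLφ x hx
      rw [← hφ.coe_toReal hx, ← hu, LinearMap.neg_apply]
      norm_cast
      linarith
  · have := hLf x hx
    rw [← hu, LinearMap.neg_apply]
    linarith

lemma exists_conj_le_coe (hφ : ProperLSCConvex φ) {p : Fin N → Fin N → ℝ}
    (hp : p ∈ algRelInterior {x | φ x ≠ ⊤}) :
    ∃ (u : Fin N → Fin N → ℝ) (c : ℝ), conj φ u ≤ c := by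
  obtain ⟨u, c, hc, -⟩ := exists_conj_le_and_forall_add_le hφ
    (convexOn_const 0 (convex_singleton p)) (mem_algRelInterior_singleton p) hp
    (m := (φ p).toReal) (by
      rintro _ rfl
      rw [hφ.coe_toReal hp.1, EReal.coe_zero, zero_add])
  exact ⟨u, c, hc⟩

end FenchelDuality

section KLDuality

open Set

variable {N : ℕ} {ξ : Fin N → Fin N → ℝ} {φ₁ φ₂ : (Fin N → Fin N → ℝ) → EReal}

/-- The primal objective `KL(π|ξ) + φ₁(π) + φ₂(π)`. -/
def klPrimal (ξ : Fin N → Fin N → ℝ) (φ₁ φ₂ : (Fin N → Fin N → ℝ) → EReal)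
    (π : Fin N → Fin N → ℝ) : EReal :=
  ((KLmat π ξ : ℝ) : EReal) + φ₁ π + φ₂ π

/-- The dual objective `-φ₁^*(u₁) - φ₂^*(u₂) - ∑ ξ e^{-(u₁+u₂)} + ∑ ξ`. -/
def klDual (ξ : Fin N → Fin N → ℝ) (φ₁ φ₂ : (Fin N → Fin N → ℝ) → EReal)
    (u₁ u₂ : Fin N → Fin N → ℝ) : EReal :=
  -conj φ₁ u₁ - conj φ₂ u₂ - ((∑ i, ∑ j, gibbs ξ (u₁ + u₂) i j : ℝ) : EReal) +
    ((∑ i, ∑ j, ξ i j : ℝ) : EReal)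

lemma klPrimal_ne_top {x : Fin N → Fin N → ℝ} (h₁ : φ₁ x ≠ ⊤) (h₂ : φ₂ x ≠ ⊤) :
    klPrimal ξ φ₁ φ₂ x ≠ ⊤ :=
  EReal.add_ne_top (EReal.add_ne_top (EReal.coe_ne_top _) h₁) h₂

lemma klPrimal_ne_bot {x : Fin N → Fin N → ℝ} (h₁ : φ₁ x ≠ ⊥) (h₂ : φ₂ x ≠ ⊥) :
    klPrimal ξ φ₁ φ₂ x ≠ ⊥ := by
  simp [klPrimal, EReal.add_eq_bot_iff, h₁, h₂]

lemma lowerSemicontinuous_klPrimal (hξ : ∀ i j, 0 < ξ i j) (hφ₁ : ProperLSCConvex φ₁)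
    (hφ₂ : ProperLSCConvex φ₂) : LowerSemicontinuous (klPrimal ξ φ₁ φ₂) := by
  have hKL : LowerSemicontinuous fun π : Fin N → Fin N → ℝ => ((KLmat π ξ : ℝ) : EReal) :=
    (continuous_coe_real_ereal.comp (continuous_KLmat hξ)).lowerSemicontinuous
  refine (hKL.add' hφ₁.2.2.1 fun x => ?_).add' hφ₂.2.2.1 fun x => ?_
  · exact EReal.continuousAt_add (.inl (EReal.coe_ne_top _)) (.inl (EReal.coe_ne_bot _))
  · exact EReal.continuousAt_add (.inr (hφ₂.1 x))
      (.inl (by simp [EReal.add_eq_bot_iff, hφ₁.1 x]))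

theorem KLmat_gibbs_add_klDual_le_klPrimal (hξ : ∀ i j, 0 < ξ i j) {x : Fin N → Fin N → ℝ}
    (h₁ : φ₁ x ≠ ⊥) (h₂ : φ₂ x ≠ ⊥) (u₁ u₂ : Fin N → Fin N → ℝ) :
    (KLmat x (gibbs ξ (u₁ + u₂)) : EReal) + klDual ξ φ₁ φ₂ u₁ u₂ ≤ klPrimal ξ φ₁ φ₂ x := by
  have young₁ := frob_sub_le_conj φ₁ u₁ x
  have young₂ := frob_sub_le_conj φ₂ u₂ x
  have identity := KLmat_gibbs_right hξ (u₁ + u₂) x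
  rw [frob_add_left] at identity
  unfold klPrimal klDual
  generalize φ₁ x = a₁ at *
  generalize φ₂ x = a₂ at *
  generalize conj φ₁ u₁ = b₁ at *
  generalize conj φ₂ u₂ = b₂ at *
  induction a₁ with
  | bot => exact absurd rfl h₁
  | top => simp [EReal.top_add_of_ne_bot h₂]
  | coe a₁ =>
  induction a₂ with
  | bot => exact absurd rfl h₂
  | top => rw [← EReal.coe_add, EReal.coe_add_top]; exact le_top
  | coe a₂ =>
  induction b₁ with
  | bot => exact absurd (le_bot_iff.1 young₁) (EReal.coe_ne_bot (_ - _))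
  | top => simp
  | coe b₁ =>
  induction b₂ with
  | bot => exact absurd (le_bot_iff.1 young₂) (EReal.coe_ne_bot (_ - _))
  | top => simp
  | coe b₂ =>
    norm_cast at young₁ young₂ ⊢
    linarith

theorem klDual_le_klPrimal (hξ : ∀ i j, 0 < ξ i j) {x : Fin N → Fin N → ℝ} (hx : 0 ≤ x)
    (h₁ : φ₁ x ≠ ⊥) (h₂ : φ₂ x ≠ ⊥) (u₁ u₂ : Fin N → Fin N → ℝ) :
    klDual ξ φ₁ φ₂ u₁ u₂ ≤ klPrimal ξ φ₁ φ₂ x :=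
  (le_add_of_nonneg_left (EReal.coe_nonneg.2 (KLmat_nonneg (gibbs_pos hξ _) hx))).trans
    (KLmat_gibbs_add_klDual_le_klPrimal hξ h₁ h₂ u₁ u₂)

theorem eq_gibbs_of_klPrimal_le_klDual (hξ : ∀ i j, 0 < ξ i j) {x : Fin N → Fin N → ℝ}
    (hx : 0 ≤ x) (h₁ : φ₁ x ≠ ⊥) (h₂ : φ₂ x ≠ ⊥) (hfin : klPrimal ξ φ₁ φ₂ x ≠ ⊤)
    {u₁ u₂ : Fin N → Fin N → ℝ} (hle : klPrimal ξ φ₁ φ₂ x ≤ klDual ξ φ₁ φ₂ u₁ u₂) :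
    x = gibbs ξ (u₁ + u₂) := by
  have gap := KLmat_gibbs_add_klDual_le_klPrimal hξ h₁ h₂ u₁ u₂
  rw [← hle.antisymm (klDual_le_klPrimal hξ hx h₁ h₂ u₁ u₂),
    ← EReal.coe_toReal hfin (klPrimal_ne_bot h₁ h₂)] at gap
  exact eq_of_KLmat_nonpos (gibbs_pos hξ _) hx
    (add_le_iff_nonpos_left.1 (by exact_mod_cast gap))

lemma coe_le_klDual {u₁ u₂ : Fin N → Fin N → ℝ} {c₁ c₂ : ℝ} (h₁ : conj φ₁ u₁ ≤ c₁)
    (h₂ : conj φ₂ u₂ ≤ c₂) :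
    ((-c₁ - c₂ - ∑ i, ∑ j, gibbs ξ (u₁ + u₂) i j + ∑ i, ∑ j, ξ i j : ℝ) : EReal) ≤
      klDual ξ φ₁ φ₂ u₁ u₂ := by
  simp only [klDual, EReal.coe_add, EReal.coe_sub, EReal.coe_neg]
  gcongr
  exact EReal.sub_le_sub (EReal.sub_le_sub (EReal.neg_le_neg_iff.2 h₁) h₂) le_rfl

theorem exists_isMinOn_klPrimal (hξ : ∀ i j, 0 < ξ i j) (hφ₁ : ProperLSCConvex φ₁)
    (hφ₂ : ProperLSCConvex φ₂) {p : Fin N → Fin N → ℝ} (hp : 0 ≤ p)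
    (hp₁ : p ∈ algRelInterior {x | φ₁ x ≠ ⊤}) (hp₂ : p ∈ algRelInterior {x | φ₂ x ≠ ⊤}) :
    ∃ π ∈ Ici 0, IsMinOn (klPrimal ξ φ₁ φ₂) (Ici 0) π := by
  obtain ⟨u₁, c₁, hc₁⟩ := exists_conj_le_coe hφ₁ hp₁
  obtain ⟨u₂, c₂, hc₂⟩ := exists_conj_le_coe hφ₂ hp₂
  set d := -c₁ - c₂ - ∑ i, ∑ j, gibbs ξ (u₁ + u₂) i j + ∑ i, ∑ j, ξ i j
  set r := (klPrimal ξ φ₁ φ₂ p).toReal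
  have hr : (r : EReal) = klPrimal ξ φ₁ φ₂ p :=
    EReal.coe_toReal (klPrimal_ne_top hp₁.1 hp₂.1) (klPrimal_ne_bot (hφ₁.1 p) (hφ₂.1 p))
  let bound : Fin N → Fin N → ℝ := fun i j => r - d + (Real.exp 1 - 1) * gibbs ξ (u₁ + u₂) i j
  have sublevel_subset {x : Fin N → Fin N → ℝ} (hx : 0 ≤ x)
      (hxp : klPrimal ξ φ₁ φ₂ x ≤ klPrimal ξ φ₁ φ₂ p) : x ∈ Icc 0 bound := by
    have gap : (KLmat x (gibbs ξ (u₁ + u₂)) : EReal) + d ≤ r :=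
      calc _ ≤ (KLmat x (gibbs ξ (u₁ + u₂)) : EReal) + klDual ξ φ₁ φ₂ u₁ u₂ := by
            gcongr; exact coe_le_klDual hc₁ hc₂
        _ ≤ klPrimal ξ φ₁ φ₂ x :=
            KLmat_gibbs_add_klDual_le_klPrimal hξ (hφ₁.1 x) (hφ₂.1 x) u₁ u₂
        _ ≤ r := hxp.trans_eq hr.symm
    norm_cast at gap
    refine ⟨hx, fun i j => (le_KLmat_add (gibbs_pos hξ (u₁ + u₂)) hx i j).trans ?_⟩
    simp only [bound]
    linarith
  have hp_mem : p ∈ Icc 0 bound := sublevel_subset hp le_rfl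
  obtain ⟨π, hπ, hmin⟩ := LowerSemicontinuousOn.exists_isMinOn ⟨p, hp_mem⟩ isCompact_Icc
    ((lowerSemicontinuous_klPrimal hξ hφ₁ hφ₂).lowerSemicontinuousOn _)
  refine ⟨π, hπ.1, fun x hx => ?_⟩
  rcases le_total (klPrimal ξ φ₁ φ₂ x) (klPrimal ξ φ₁ φ₂ p) with hxp | hpx
  · exact hmin (sublevel_subset hx hxp)
  · exact (hmin hp_mem).trans hpx

theorem exists_coe_le_klDual (hξ : ∀ i j, 0 < ξ i j) (hφ₁ : ProperLSCConvex φ₁)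
    (hφ₂ : ProperLSCConvex φ₂) {p : Fin N → Fin N → ℝ} (hp : p ∈ algRelInterior (Ici 0))
    (hp₁ : p ∈ algRelInterior {x | φ₁ x ≠ ⊤}) (hp₂ : p ∈ algRelInterior {x | φ₂ x ≠ ⊤}) {m : ℝ}
    (hm : ∀ x, 0 ≤ x → (m : EReal) ≤ klPrimal ξ φ₁ φ₂ x) :
    ∃ u₁ u₂ : Fin N → Fin N → ℝ, (m : EReal) ≤ klDual ξ φ₁ φ₂ u₁ u₂ := by
  have convexOn_KL_add_φ₁ :
      ConvexOn ℝ (Ici 0 ∩ {x | φ₁ x ≠ ⊤}) fun x => KLmat x ξ + (φ₁ x).toReal :=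
    have convex := (convex_Ici 0).inter hφ₁.convexOn_toReal.1
    ((convexOn_KLmat hξ).subset inter_subset_left convex).add
      (hφ₁.convexOn_toReal.subset inter_subset_right convex)
  obtain ⟨u₂, c₂, hc₂, hu₂⟩ := exists_conj_le_and_forall_add_le hφ₂ convexOn_KL_add_φ₁
    (mem_algRelInterior_inter hp hp₁) hp₂ (m := m) (by
      rintro x ⟨hx, hx₁⟩
      rw [EReal.coe_add, hφ₁.coe_toReal hx₁]
      exact hm x hx)
  obtain ⟨u₁, c₁, hc₁, hu₁⟩ := exists_conj_le_and_forall_add_le hφ₁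
    ((convexOn_KLmat hξ).add (convexOn_frob (convex_Ici 0) u₂)) hp hp₁ (m := m + c₂) (by
      intro x hx
      rcases eq_or_ne (φ₁ x) ⊤ with hx₁ | hx₁
      · simp [hx₁]
      · have := hu₂ x ⟨hx, hx₁⟩
        rw [← hφ₁.coe_toReal hx₁]
        norm_cast
        simp only [Pi.add_apply]
        linarith)
  refine ⟨u₁, u₂, (EReal.coe_le_coe_iff.2 ?_).trans (coe_le_klDual hc₁ hc₂)⟩
  have at_gibbs := hu₁ (gibbs ξ (u₁ + u₂)) fun i j => (gibbs_pos hξ _ i j).le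
  have identity := KLmat_gibbs_right hξ (u₁ + u₂) (gibbs ξ (u₁ + u₂))
  rw [KLmat_self (gibbs_pos hξ _), frob_add_left] at identity
  simp only [Pi.add_apply] at at_gibbs
  linarith

end KLDuality

/-- Strong duality for KL-regularized problems, attainment of the dual maximum, and
recovery of the unique primal minimizer `π* = ξ ⊙ e^{-u₁*-u₂*}`. -/
theorem KL_strong_duality {N : ℕ} (hN : 1 ≤ N)
    (ξ : Fin N → Fin N → ℝ) (hξ : ∀ i j, 0 < ξ i j)
    (φ₁ φ₂ : (Fin N → Fin N → ℝ) → EReal)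
    (hφ₁ : ProperLSCConvex φ₁) (hφ₂ : ProperLSCConvex φ₂)
    (hqual : (intrinsicInterior ℝ {π | φ₁ π ≠ ⊤} ∩ intrinsicInterior ℝ {π | φ₂ π ≠ ⊤} ∩
      {π : Fin N → Fin N → ℝ | ∀ i j, 0 < π i j}).Nonempty)
    (P : (Fin N → Fin N → ℝ) → EReal)
    (hP : P = fun π => ((KLmat π ξ : ℝ) : EReal) + φ₁ π + φ₂ π)
    (D : (Fin N → Fin N → ℝ) → (Fin N → Fin N → ℝ) → EReal)
    (hD : D = fun u₁ u₂ =>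
      -conj φ₁ u₁ - conj φ₂ u₂ -
        ((∑ i, ∑ j, ξ i j * Real.exp (-(u₁ i j + u₂ i j)) : ℝ) : EReal) +
        ((∑ i, ∑ j, ξ i j : ℝ) : EReal)) :
    ∃ (u₁s u₂s : Fin N → Fin N → ℝ),
      (∀ u₁ u₂ : Fin N → Fin N → ℝ, D u₁ u₂ ≤ D u₁s u₂s) ∧
      (let πs : Fin N → Fin N → ℝ := fun i j => ξ i j * Real.exp (-(u₁s i j + u₂s i j))
       (∀ π : Fin N → Fin N → ℝ, (∀ i j, 0 ≤ π i j) → P πs ≤ P π) ∧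
       (∀ π : Fin N → Fin N → ℝ, (∀ i j, 0 ≤ π i j) →
          (∀ π' : Fin N → Fin N → ℝ, (∀ i j, 0 ≤ π' i j) → P π ≤ P π') → π = πs) ∧
       P πs = D u₁s u₂s) := by
  subst hP hD
  obtain ⟨p, ⟨hp₁, hp₂⟩, hp⟩ := hqual
  replace hp₁ := intrinsicInterior_subset_algRelInterior _ hp₁
  replace hp₂ := intrinsicInterior_subset_algRelInterior _ hp₂
  replace hp := mem_algRelInterior_Ici_zero_of_pos hp
  obtain ⟨π₀, hπ₀, hmin⟩ := exists_isMinOn_klPrimal hξ hφ₁ hφ₂ hp.1 hp₁ hp₂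
  have hfin : klPrimal ξ φ₁ φ₂ π₀ ≠ ⊤ :=
    ne_top_of_le_ne_top (klPrimal_ne_top hp₁.1 hp₂.1) (hmin hp.1)
  obtain ⟨u₁, u₂, no_gap⟩ : ∃ u₁ u₂, klPrimal ξ φ₁ φ₂ π₀ ≤ klDual ξ φ₁ φ₂ u₁ u₂ := by
    have hcoe := EReal.coe_toReal hfin (klPrimal_ne_bot (hφ₁.1 π₀) (hφ₂.1 π₀))
    rw [← hcoe]
    exact exists_coe_le_klDual hξ hφ₁ hφ₂ hp hp₁ hp₂ fun π hπ => hcoe.trans_le (hmin hπ)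
  have weak_duality := klDual_le_klPrimal hξ hπ₀ (hφ₁.1 π₀) (hφ₂.1 π₀)
  have eq_gibbs {π : Fin N → Fin N → ℝ} (hπ : 0 ≤ π)
      (hle : klPrimal ξ φ₁ φ₂ π ≤ klPrimal ξ φ₁ φ₂ π₀) : π = gibbs ξ (u₁ + u₂) :=
    eq_gibbs_of_klPrimal_le_klDual hξ hπ (hφ₁.1 π) (hφ₂.1 π) (ne_top_of_le_ne_top hfin hle)
      (hle.trans no_gap)
  obtain rfl := eq_gibbs hπ₀ le_rfl
  exact ⟨u₁, u₂, fun v₁ v₂ => (weak_duality v₁ v₂).trans no_gap, fun _ hπ => hmin hπ,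
    fun _ hπ hπmin => eq_gibbs hπ (hπmin _ hπ₀), no_gap.antisymm (weak_duality u₁ u₂)⟩
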